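/- Let G be a finite simple undirected graph containing a split gadget S_k (k ≥ 2) none of whose vertices is s or t. In any non-transitive st-orientation of G: if the input edge of S_k is oriented entering S_k, then all k output edges of S_k are oriented exiting S_k; and if the input edge of S_k is oriented exiting S_k, then all k output edges of S_k are oriented entering S_k. -/

import Mathlib

variable {V : Type*}

/-- `D` is an orientation of `G`: every directed edge lies on an edge of `G`,
and every edge of `G` receives exactly one of the two possible directions. -/
def IsOrientation (G : SimpleGraph V) (D : V → V → Prop) : Prop :=
  (∀ u v, D u v → G.Adj u v) ∧ ∀ u v, G.Adj u v → (D u v ↔ ¬ D v u)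

/-- A digraph is acyclic if it has no directed cycle. -/
def DigraphAcyclic (D : V → V → Prop) : Prop :=
  ∀ v, ¬ Relation.TransGen D v v

/-- An st-orientation: an acyclic orientation with unique source `s` and unique sink `t`. -/
def IsSTOrientation (G : SimpleGraph V) (D : V → V → Prop) (s t : V) : Prop :=
  IsOrientation G D ∧ DigraphAcyclic D ∧
    (∀ u, ¬ D u s) ∧ (∀ v, (∀ u, ¬ D u v) → v = s) ∧
    (∀ u, ¬ D t u) ∧ (∀ v, (∀ u, ¬ D v u) → v = t)

/-- A directed edge `(u,v)` is transitive if there is a directed path from `u` to `v`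
of length at least 2. -/
def TransEdge (D : V → V → Prop) (u v : V) : Prop :=
  D u v ∧ ∃ w, D u w ∧ Relation.TransGen D w v

/-- A non-transitive st-orientation: an st-orientation with no transitive edge. -/
def IsNonTransSTOrientation (G : SimpleGraph V) (D : V → V → Prop) (s t : V) : Prop :=
  IsSTOrientation G D s t ∧ ∀ u v, ¬ TransEdge D u v

/-- A fork gadget in `G`: six vertices `v, m1, m2, x, w, z` with the prescribed internal
edges, three boundary edges `e1 = {a,v}`, `e9 = {w,b}`, `e10 = {z,c}` to outside vertices
`a, b, c`, and no other incident edges at the six fork vertices. -/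
structure ForkGadget (G : SimpleGraph V) where
  a : V
  v : V
  m1 : V
  m2 : V
  x : V
  w : V
  z : V
  b : V
  c : V
  distinct : List.Pairwise (· ≠ ·) [v, m1, m2, x, w, z]
  a_outside : a ∉ [v, m1, m2, x, w, z]
  b_outside : b ∉ [v, m1, m2, x, w, z]
  c_outside : c ∉ [v, m1, m2, x, w, z]
  nbr_v : ∀ u, G.Adj v u ↔ u = a ∨ u = m1 ∨ u = x ∨ u = m2
  nbr_m1 : ∀ u, G.Adj m1 u ↔ u = v ∨ u = w
  nbr_m2 : ∀ u, G.Adj m2 u ↔ u = v ∨ u = z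
  nbr_x : ∀ u, G.Adj x u ↔ u = v ∨ u = w ∨ u = z
  nbr_w : ∀ u, G.Adj w u ↔ u = m1 ∨ u = x ∨ u = b
  nbr_z : ∀ u, G.Adj z u ↔ u = m2 ∨ u = x ∨ u = c

/-- The six fork vertices of a fork gadget. -/
def ForkGadget.verts {G : SimpleGraph V} (F : ForkGadget G) : Set V :=
  {F.v, F.m1, F.m2, F.x, F.w, F.z}

/-- The vertex set of a chain of `k - 1` fork gadgets `fork 0, …, fork (k-2)`. -/
def forkChainVerts {G : SimpleGraph V} (fork : ℕ → ForkGadget G) (k : ℕ) : Set V :=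
  {u | ∃ i, i < k - 1 ∧ u ∈ (fork i).verts}

/-- A split gadget `S_k` in `G`: a chain of `k - 1` vertex-disjoint fork gadgets
`fork 0, …, fork (k-2)` where, for each consecutive pair, the boundary edge `e9` of
`fork i` is identified with the boundary edge `e1` of `fork (i+1)`. The input edge is
`e1` of `fork 0`; the `k` output edges are the edges `e10` of each fork together with the
edge `e9` of the last fork, all joining the gadget to the rest of `G`. -/
structure SplitGadget (G : SimpleGraph V) (k : ℕ) where
  fork : ℕ → ForkGadget G
  chain : ∀ i, i + 1 < k - 1 →
    (fork i).b = (fork (i + 1)).v ∧ (fork (i + 1)).a = (fork i).w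
  disjoint : ∀ i j, i < k - 1 → j < k - 1 → i ≠ j →
    Disjoint (fork i).verts (fork j).verts
  input_outside : (fork 0).a ∉ forkChainVerts fork k
  output_c_outside : ∀ i, i < k - 1 → (fork i).c ∉ forkChainVerts fork k
  output_b_outside : (fork (k - 2)).b ∉ forkChainVerts fork k

/-!
A vertex of degree two that is neither a source nor a sink lies on a directed path, and when it
sits on a 4-cycle the other two edges must run parallel to that path: any other orientation closes
a directed cycle or makes an edge transitive. The two 4-cycles of a fork gadget share the edge
`{v, x}`, so the internal edges of the gadget either all lead from `v` to `w` and `z`, or all lead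
back to `v`. If the input edge enters the gadget, the second case makes `v` a sink, and in the first
case `w` and `z` can only be left through their boundary edges. Reversing every arc settles the
other direction of the input edge, and induction along the chain handles the split gadget.
-/

section

variable {G : SimpleGraph V} {D : V → V → Prop}

theorem IsOrientation.asymm (h : IsOrientation G D) {u v : V} (huv : D u v) : ¬ D v u :=
  (h.2 u v (h.1 u v huv)).1 huv

theorem IsOrientation.or_of_adj (h : IsOrientation G D) {u v : V} (huv : G.Adj u v) :
    D u v ∨ D v u :=
  or_iff_not_imp_right.2 (h.2 u v huv).2

theorem IsOrientation.swap (h : IsOrientation G D) : IsOrientation G (Function.swap D) :=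
  ⟨fun u v hvu => (h.1 v u hvu).symm, fun u v huv => h.2 v u huv.symm⟩

theorem IsOrientation.arc_of_forall_arc_or_eq (h : IsOrientation G D) {y b : V} (hy : ∃ u, D y u)
    (hin : ∀ u, G.Adj y u → D u y ∨ u = b) : D y b := by
  obtain ⟨u, hyu⟩ := hy
  obtain rfl := (hin u (h.1 y u hyu)).resolve_left (h.asymm hyu)
  exact hyu

theorem DigraphAcyclic.swap (h : DigraphAcyclic D) : DigraphAcyclic (Function.swap D) :=
  fun v hv => h v (Relation.transGen_swap.1 hv)

theorem TransEdge.of_swap {u v : V} (h : TransEdge (Function.swap D) u v) : TransEdge D v u := by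
  obtain ⟨hvu, w, hwu, hwv⟩ := h
  obtain ⟨y, hvy, hyw⟩ := Relation.TransGen.head'_iff.1 (Relation.transGen_swap.1 hwv)
  exact ⟨hvu, y, hvy, Relation.TransGen.tail' hyw hwu⟩

/-- A non-transitive acyclic orientation of `G`: what remains of a non-transitive st-orientation
when any number of sources and sinks is allowed. -/
structure IsNonTransAcyclicOrientation (G : SimpleGraph V) (D : V → V → Prop) : Prop where
  orientation : IsOrientation G D
  acyclic : DigraphAcyclic D
  nonTrans : ∀ u v, ¬ TransEdge D u v

theorem IsNonTransAcyclicOrientation.swap (h : IsNonTransAcyclicOrientation G D) :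
    IsNonTransAcyclicOrientation G (Function.swap D) :=
  ⟨h.orientation.swap, h.acyclic.swap, fun u v huv => h.nonTrans v u huv.of_swap⟩

theorem IsNonTransSTOrientation.isNonTransAcyclicOrientation {s t : V}
    (h : IsNonTransSTOrientation G D s t) : IsNonTransAcyclicOrientation G D :=
  ⟨h.1.1, h.1.2.1, h.2⟩

/-- An inner vertex of a digraph: one that is neither a source nor a sink. In an st-orientation
these are the vertices other than `s` and `t`. -/
def IsInnerVertex (D : V → V → Prop) (y : V) : Prop :=
  (∃ u, D u y) ∧ ∃ u, D y u

theorem IsInnerVertex.swap {y : V} (h : IsInnerVertex D y) : IsInnerVertex (Function.swap D) y :=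
  And.symm h

theorem IsSTOrientation.isInnerVertex {s t y : V} (h : IsSTOrientation G D s t) (hs : y ≠ s)
    (ht : y ≠ t) : IsInnerVertex D y := by
  obtain ⟨-, -, -, eq_s_of_source, -, eq_t_of_sink⟩ := h
  exact ⟨not_forall_not.1 (mt (eq_s_of_source y) hs), not_forall_not.1 (mt (eq_t_of_sink y) ht)⟩

theorem IsOrientation.path_through_of_degree_two (h : IsOrientation G D) {p q r : V}
    (hq : IsInnerVertex D q) (hnbr : ∀ u, G.Adj q u ↔ u = p ∨ u = r) :
    (D p q ∧ D q r) ∨ (D r q ∧ D q p) := by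
  rcases h.or_of_adj ((hnbr p).2 (.inl rfl)) with hqp | hpq
  · exact .inr ⟨h.swap.arc_of_forall_arc_or_eq hq.1
      fun u hu => ((hnbr u).1 hu).imp (by rintro rfl; exact hqp) id, hqp⟩
  · exact .inl ⟨hpq, h.arc_of_forall_arc_or_eq hq.2
      fun u hu => ((hnbr u).1 hu).imp (by rintro rfl; exact hpq) id⟩

theorem parallel_path_of_path (hac : DigraphAcyclic D) (hnt : ∀ u v, ¬ TransEdge D u v)
    {p q r x : V} (hpq : D p q) (hqr : D q r) (hpx : D p x ∨ D x p) (hxr : D x r ∨ D r x) :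
    D p x ∧ D x r := by
  have hpr : Relation.TransGen D p r := .tail (.single hpq) hqr
  have hpx' : D p x := hpx.resolve_right fun hxp =>
    hxr.elim (fun hxr => hnt x r ⟨hxr, p, hxp, hpr⟩)
      fun hrx => hac p ((hpr.tail hrx).tail hxp)
  exact ⟨hpx', hxr.resolve_right fun hrx => hnt p x ⟨hpx', q, hpq, .tail (.single hqr) hrx⟩⟩

theorem IsNonTransAcyclicOrientation.parallel_of_square (h : IsNonTransAcyclicOrientation G D)
    {p q r x : V} (hq : IsInnerVertex D q) (hnbr : ∀ u, G.Adj q u ↔ u = p ∨ u = r)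
    (hxp : G.Adj x p) (hxr : G.Adj x r) :
    ((D p q ∧ D q r) ∧ D p x ∧ D x r) ∨ ((D r q ∧ D q p) ∧ D r x ∧ D x p) := by
  have hp := h.orientation.or_of_adj hxp
  have hr := h.orientation.or_of_adj hxr
  refine (h.orientation.path_through_of_degree_two hq hnbr).imp ?_ ?_
  · exact fun hpath =>
      ⟨hpath, parallel_path_of_path h.acyclic h.nonTrans hpath.1 hpath.2 hp.symm hr⟩
  · exact fun hpath =>
      ⟨hpath, parallel_path_of_path h.acyclic h.nonTrans hpath.1 hpath.2 hr.symm hp⟩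

theorem ForkGadget.internal_away_or_toward (F : ForkGadget G)
    (h : IsNonTransAcyclicOrientation G D) (hm1 : IsInnerVertex D F.m1)
    (hm2 : IsInnerVertex D F.m2) :
    (D F.m1 F.w ∧ D F.x F.w ∧ D F.m2 F.z ∧ D F.x F.z) ∨
      (D F.m1 F.v ∧ D F.x F.v ∧ D F.m2 F.v) := by
  have hxv : G.Adj F.x F.v := (F.nbr_x F.v).2 (.inl rfl)
  have hxw : G.Adj F.x F.w := (F.nbr_x F.w).2 (.inr (.inl rfl))
  have hxz : G.Adj F.x F.z := (F.nbr_x F.z).2 (.inr (.inr rfl))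
  rcases h.parallel_of_square hm1 F.nbr_m1 hxv hxw with
      ⟨⟨-, m1w⟩, vx, xw⟩ | ⟨⟨-, m1v⟩, -, xv⟩ <;>
    rcases h.parallel_of_square hm2 F.nbr_m2 hxv hxz with
      ⟨⟨-, m2z⟩, vx', xz⟩ | ⟨⟨-, m2v⟩, -, xv'⟩
  · exact .inl ⟨m1w, xw, m2z, xz⟩
  · exact absurd xv' (h.orientation.asymm vx)
  · exact absurd xv (h.orientation.asymm vx')
  · exact .inr ⟨m1v, xv, m2v⟩

theorem ForkGadget.outputs_exit (F : ForkGadget G) (h : IsNonTransAcyclicOrientation G D)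
    (hF : ∀ y ∈ F.verts, IsInnerVertex D y) (hav : D F.a F.v) : D F.z F.c ∧ D F.w F.b := by
  have hO := h.orientation
  rcases F.internal_away_or_toward h (hF F.m1 (by simp [verts])) (hF F.m2 (by simp [verts])) with
    ⟨m1w, xw, m2z, xz⟩ | ⟨m1v, xv, m2v⟩
  · constructor
    · refine hO.arc_of_forall_arc_or_eq (hF F.z (by simp [verts])).2 fun u hu => ?_
      rcases (F.nbr_z u).1 hu with rfl | rfl | hc
      exacts [.inl m2z, .inl xz, .inr hc]
    · refine hO.arc_of_forall_arc_or_eq (hF F.w (by simp [verts])).2 fun u hu => ?_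
      rcases (F.nbr_w u).1 hu with rfl | rfl | hb
      exacts [.inl m1w, .inl xw, .inr hb]
  · have hva : D F.v F.a := by
      refine hO.arc_of_forall_arc_or_eq (hF F.v (by simp [verts])).2 fun u hu => ?_
      rcases (F.nbr_v u).1 hu with ha | rfl | rfl | rfl
      exacts [.inr ha, .inl m1v, .inl xv, .inl m2v]
    exact absurd hva (hO.asymm hav)

theorem SplitGadget.fork_inputs_enter {k : ℕ} (S : SplitGadget G k)
    (h : IsNonTransAcyclicOrientation G D)
    (hS : ∀ y ∈ forkChainVerts S.fork k, IsInnerVertex D y)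
    (h0 : D (S.fork 0).a (S.fork 0).v) {i : ℕ} (hi : i < k - 1) :
    D (S.fork i).a (S.fork i).v := by
  induction i with
  | zero => exact h0
  | succ n ih =>
    have hn : n < k - 1 := n.lt_succ_self.trans hi
    have hwb := ((S.fork n).outputs_exit h (fun y hy => hS y ⟨n, hn, hy⟩) (ih hn)).2
    obtain ⟨hb, ha⟩ := S.chain n hi
    rwa [hb, ← ha] at hwb

theorem SplitGadget.outputs_exit {k : ℕ} (hk : 2 ≤ k) (S : SplitGadget G k)
    (h : IsNonTransAcyclicOrientation G D)
    (hS : ∀ y ∈ forkChainVerts S.fork k, IsInnerVertex D y)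
    (h0 : D (S.fork 0).a (S.fork 0).v) :
    (∀ i, i < k - 1 → D (S.fork i).z (S.fork i).c) ∧
      D (S.fork (k - 2)).w (S.fork (k - 2)).b := by
  have hfork : ∀ i, i < k - 1 →
      D (S.fork i).z (S.fork i).c ∧ D (S.fork i).w (S.fork i).b := fun i hi =>
    (S.fork i).outputs_exit h (fun y hy => hS y ⟨i, hi, hy⟩) (S.fork_inputs_enter h hS h0 hi)
  exact ⟨fun i hi => (hfork i hi).1, (hfork (k - 2) (by lia)).2⟩

theorem stmt9_general {k : ℕ} (hk : 2 ≤ k) (S : SplitGadget G k)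
    (hD : IsNonTransAcyclicOrientation G D)
    (hS : ∀ y ∈ forkChainVerts S.fork k, IsInnerVertex D y) :
    (D (S.fork 0).a (S.fork 0).v →
      (∀ i, i < k - 1 → D (S.fork i).z (S.fork i).c) ∧
      D (S.fork (k - 2)).w (S.fork (k - 2)).b) ∧
    (D (S.fork 0).v (S.fork 0).a →
      (∀ i, i < k - 1 → D (S.fork i).c (S.fork i).z) ∧
      D (S.fork (k - 2)).b (S.fork (k - 2)).w) :=
  ⟨S.outputs_exit hk hD hS, S.outputs_exit hk hD.swap fun y hy => (hS y hy).swap⟩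

end

/-- In any non-transitive st-orientation of a graph containing a split gadget `S_k`
(`k ≥ 2`) avoiding `s` and `t`: if the input edge enters the gadget then all `k` output
edges exit it, and if the input edge exits the gadget then all `k` output edges enter
it. -/
theorem stmt9 {V : Type*} (G : SimpleGraph V) (s t : V) (hst : s ≠ t)
    (k : ℕ) (hk : 2 ≤ k) (S : SplitGadget G k)
    (hs : s ∉ forkChainVerts S.fork k) (ht : t ∉ forkChainVerts S.fork k)
    (D : V → V → Prop) (hD : IsNonTransSTOrientation G D s t) :
    (D (S.fork 0).a (S.fork 0).v →
      (∀ i, i < k - 1 → D (S.fork i).z (S.fork i).c) ∧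
      D (S.fork (k - 2)).w (S.fork (k - 2)).b) ∧
    (D (S.fork 0).v (S.fork 0).a →
      (∀ i, i < k - 1 → D (S.fork i).c (S.fork i).z) ∧
      D (S.fork (k - 2)).b (S.fork (k - 2)).w) :=
  stmt9_general hk S hD.isNonTransAcyclicOrientation fun _ hy =>
    hD.1.isInnerVertex (ne_of_mem_of_not_mem hy hs) (ne_of_mem_of_not_mem hy ht)
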